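/- Let N = 2 and F = 1/√2, and let ρ_F be the corresponding density matrix on ℂ² ⊗ ℂ². Then ρ_F ⊗ ρ_F, regarded as a density matrix on ℂ⁴ ⊗ ℂ⁴ via the reordering isomorphism that groups the two 'Alice' qubits together and the two 'Bob' qubits together, belongs to S_2: it admits a decomposition into pure states each of Schmidt rank at most 2 across the (A₁A₂):(B₁B₂) cut. -/

import Mathlib

open Matrix BigOperators
open scoped ComplexOrder

/-- The `n × n` matrix `M_ψ` associated to a vector `ψ ∈ ℂ^α ⊗ ℂ^β`,
with entries `(M_ψ)_{ij} = ⟨e_i ⊗ e_j, ψ⟩ = ψ (i, j)`. -/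
def matOfVec {α β : Type*} (ψ : α × β → ℂ) : Matrix α β ℂ :=
  Matrix.of fun i j => ψ (i, j)

/-- The Schmidt rank of a bipartite vector is the rank of its associated matrix. -/
noncomputable def schmidtRank {α β : Type*} [Fintype β] (ψ : α × β → ℂ) : ℕ :=
  (matOfVec ψ).rank

/-- `ψ` is a unit vector. -/
def IsUnitVec {γ : Type*} [Fintype γ] (ψ : γ → ℂ) : Prop :=
  ∑ x, Complex.normSq (ψ x) = 1

/-- The outer product `|ψ⟩⟨ψ|`. -/
def outer {γ : Type*} (ψ : γ → ℂ) : Matrix γ γ ℂ :=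
  Matrix.of fun x y => ψ x * star (ψ y)

/-- `ρ ∈ S_k`: `ρ` admits a decomposition `ρ = ∑ i, p i • |ψ i⟩⟨ψ i|` with `p i ≥ 0`,
`∑ i, p i = 1`, each `ψ i` a unit vector of Schmidt rank at most `k`. -/
def InSchmidtClass {α : Type*} [Fintype α] (k : ℕ)
    (ρ : Matrix (α × α) (α × α) ℂ) : Prop :=
  ∃ (m : ℕ) (p : Fin m → ℝ) (ψ : Fin m → α × α → ℂ),
    (∀ i, 0 ≤ p i) ∧ (∑ i, p i) = 1 ∧
    (∀ i, IsUnitVec (ψ i)) ∧ (∀ i, schmidtRank (ψ i) ≤ k) ∧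
    ρ = ∑ i, (p i : ℂ) • outer (ψ i)

/-- The map `1 ⊗ Λ`, applying `Λ` to each block of a matrix indexed by `γ × Fin n`. -/
def blockMap {γ : Type*} {n m : ℕ}
    (Λ : Matrix (Fin n) (Fin n) ℂ → Matrix (Fin m) (Fin m) ℂ)
    (X : Matrix (γ × Fin n) (γ × Fin n) ℂ) : Matrix (γ × Fin m) (γ × Fin m) ℂ :=
  Matrix.of fun a b => Λ (Matrix.of fun s t => X (a.1, s) (b.1, t)) a.2 b.2

/-- `Λ` is Hermiticity-preserving: `Λ(X†) = Λ(X)†`. -/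
def HermPreserving {n m : ℕ}
    (Λ : Matrix (Fin n) (Fin n) ℂ → Matrix (Fin m) (Fin m) ℂ) : Prop :=
  ∀ X, Λ Xᴴ = (Λ X)ᴴ

/-- `Λ` is `k`-positive: `(1 ⊗ Λ)(|ψ⟩⟨ψ|)` is positive semidefinite for every
unit vector `ψ ∈ ℂ^N ⊗ ℂ^N` of Schmidt rank at most `k`. -/
def kPositive {N : ℕ} (k : ℕ)
    (Λ : Matrix (Fin N) (Fin N) ℂ → Matrix (Fin N) (Fin N) ℂ) : Prop :=
  ∀ ψ : Fin N × Fin N → ℂ, IsUnitVec ψ → schmidtRank ψ ≤ k →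
    (blockMap Λ (outer ψ)).PosSemidef

/-- The maximally entangled state `Ψ⁺ = (1/√N) ∑ i, e i ⊗ e i`. -/
noncomputable def psiPlus (N : ℕ) : Fin N × Fin N → ℂ :=
  fun x => if x.1 = x.2 then ((Real.sqrt N : ℂ))⁻¹ else 0

/-- The isotropic state `ρ_F = F |Ψ⁺⟩⟨Ψ⁺| + ((1−F)/(N²−1)) (I − |Ψ⁺⟩⟨Ψ⁺|)`. -/
noncomputable def rhoF (N : ℕ) (F : ℝ) : Matrix (Fin N × Fin N) (Fin N × Fin N) ℂ :=
  (F : ℂ) • outer (psiPlus N) +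
    (((1 - F) / ((N : ℝ) ^ 2 - 1) : ℝ) : ℂ) •
      ((1 : Matrix (Fin N × Fin N) (Fin N × Fin N) ℂ) - outer (psiPlus N))

/-- The Kronecker product `ρ ⊗ σ` of bipartite states, with indices regrouped via the
reordering isomorphism `(ℂ^α ⊗ ℂ^α) ⊗ (ℂ^β ⊗ ℂ^β) ≅ (ℂ^α ⊗ ℂ^β) ⊗ (ℂ^α ⊗ ℂ^β)` so that the
first factor collects the two Alice systems and the second the two Bob systems. -/
def reorderedKron {α β : Type*}
    (ρ : Matrix (α × α) (α × α) ℂ) (σ : Matrix (β × β) (β × β) ℂ) :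
    Matrix ((α × β) × (α × β)) ((α × β) × (α × β)) ℂ :=
  Matrix.of fun x y =>
    ρ (x.1.1, x.2.1) (y.1.1, y.2.1) * σ (x.1.2, x.2.2) (y.1.2, y.2.2)

/-!
On `ℂⁿ ⊗ ℂⁿ` write `ω_U` for the pure state whose vector has matrix `U / √n`, with `U` unitary. If
`S` is a traceless Hermitian involution, then `(1 + S) / 2` and `(1 - S) / 2` are complementary
projections of rank `n / 2`, and by the parallelogram identity `(ω_1 + ω_S) / 2` is the equal
mixture of the two pure states they define, so it lies in `S_{n/2}`.

The state `ρ_F ⊗ ρ_G` is a mixture of the sixteen states `ω_{σ_a ⊗ σ_b}` with `n = 4`, in which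
`ω_1` has weight `F G`. When `F G = 1 / 2`, the states other than `ω_1` have total weight `1 / 2` as
well. Pairing each of them with an equal share of `ω_1` exhibits `ρ_F ⊗ ρ_G` as a mixture of states
of the form `(ω_1 + ω_S) / 2`.
-/

open scoped Kronecker

theorem sum_smul_mem_of_midpoint_mem {E ι : Type*} [AddCommGroup E] [Module ℝ E] [Fintype ι]
    {s : Set E} (hs : Convex ℝ s) {x : ι → E} {w : ι → ℝ} {i₀ : ι}
    (hx : ∀ i, i ≠ i₀ → midpoint ℝ (x i₀) (x i) ∈ s) (hw : ∀ i, 0 ≤ w i)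
    (hsum : ∑ i, w i = 1) (hw₀ : w i₀ = 1 / 2) : ∑ i, w i • x i ∈ s := by
  classical
  have hrest : ∑ i ∈ Finset.univ.erase i₀, w i = 1 / 2 := by
    rw [← Finset.add_sum_erase _ _ (Finset.mem_univ i₀)] at hsum
    linarith
  have hpair : ∑ i, w i • x i =
      ∑ i ∈ Finset.univ.erase i₀, (2 * w i) • midpoint ℝ (x i₀) (x i) := by
    calc ∑ i, w i • x i
        = (∑ i ∈ Finset.univ.erase i₀, w i) • x i₀ + ∑ i ∈ Finset.univ.erase i₀, w i • x i := by
          rw [hrest, ← hw₀, Finset.add_sum_erase _ (fun i => w i • x i) (Finset.mem_univ i₀)]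
      _ = ∑ i ∈ Finset.univ.erase i₀, (2 * w i) • midpoint ℝ (x i₀) (x i) := by
          rw [Finset.sum_smul, ← Finset.sum_add_distrib]
          refine Finset.sum_congr rfl fun i _ => ?_
          rw [midpoint_eq_smul_add, invOf_eq_inv]
          module
  rw [hpair]
  refine hs.sum_mem (fun i _ => mul_nonneg zero_le_two (hw i)) ?_
    fun i hi => hx i (Finset.ne_of_mem_erase hi)
  rw [← Finset.mul_sum, hrest]
  norm_num

theorem rank_eq_trace_of_isIdempotentElem {n K : Type*} [Fintype n] [Field K]
    {A : Matrix n n K} (hA : IsIdempotentElem A) : (A.rank : K) = A.trace := by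
  classical
  have hproj := LinearMap.IsIdempotentElem.isProj_range _ (hA.map Matrix.toLinAlgEquiv')
  rw [← Matrix.trace_toLin'_eq]
  exact hproj.trace.symm

section SchmidtClass

variable {α : Type*} [Fintype α] {k : ℕ}

theorem inSchmidtClass_iff_mem_convexHull {ρ : Matrix (α × α) (α × α) ℂ} :
    InSchmidtClass k ρ ↔ ρ ∈ convexHull ℝ (outer '' {ψ | IsUnitVec ψ ∧ schmidtRank ψ ≤ k}) := by
  constructor
  · rintro ⟨m, p, ψ, hp, hsum, hunit, hrank, rfl⟩
    exact mem_convexHull_of_exists_fintype p (fun i => outer (ψ i)) hp hsum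
      (fun i => ⟨ψ i, ⟨hunit i, hrank i⟩, rfl⟩) rfl
  · rw [mem_convexHull_iff_exists_fintype]
    rintro ⟨ι, _, p, σ, hp, hsum, hσ, rfl⟩
    choose ψ hψ hout using hσ
    let e := (Fintype.equivFin ι).symm
    refine ⟨Fintype.card ι, p ∘ e, ψ ∘ e, fun i => hp (e i), (e.sum_comp p).trans hsum,
      fun i => (hψ (e i)).1, fun i => (hψ (e i)).2, ?_⟩
    rw [← e.sum_comp]
    simp only [Function.comp_apply, hout, Complex.coe_smul]

theorem convex_setOf_inSchmidtClass :
    Convex ℝ {ρ : Matrix (α × α) (α × α) ℂ | InSchmidtClass k ρ} := by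
  simp only [inSchmidtClass_iff_mem_convexHull]
  exact convex_convexHull ℝ _

theorem inSchmidtClass_inv_smul_outer {ψ : α × α → ℂ} {t : ℝ} (ht : 0 < t)
    (hψ : ∑ x, Complex.normSq (ψ x) = t) (hrank : schmidtRank ψ ≤ k) :
    InSchmidtClass k (t⁻¹ • outer ψ) := by
  classical
  have hsqrt : (√t)⁻¹ * (√t)⁻¹ = t⁻¹ := by rw [← mul_inv, Real.mul_self_sqrt ht.le]
  refine inSchmidtClass_iff_mem_convexHull.2 (subset_convexHull ℝ _
    ⟨fun x => (((√t)⁻¹ : ℝ) : ℂ) * ψ x, ⟨?_, ?_⟩, ?_⟩)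
  · simp only [IsUnitVec, Complex.normSq_mul, Complex.normSq_ofReal, hsqrt, ← Finset.mul_sum, hψ]
    exact inv_mul_cancel₀ ht.ne'
  · have hmat : matOfVec (fun x => (((√t)⁻¹ : ℝ) : ℂ) * ψ x) =
        ((((√t)⁻¹ : ℝ) : ℂ) • (1 : Matrix α α ℂ)) * matOfVec ψ := by
      rw [Matrix.smul_mul, one_mul]
      rfl
    rw [schmidtRank, hmat]
    exact (Matrix.rank_mul_le_right _ _).trans hrank
  · ext x y
    rw [Matrix.smul_apply, Complex.real_smul, ← hsqrt]
    simp only [outer, Matrix.of_apply, star_mul', Complex.star_def, Complex.conj_ofReal]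
    push_cast
    ring

end SchmidtClass

/-- The bipartite vector with matrix `A`: the inverse of `matOfVec`. -/
def vecOfMat {α β : Type*} (A : Matrix α β ℂ) : α × β → ℂ := fun x => A x.1 x.2

theorem ofReal_sum_normSq_vecOfMat {α β : Type*} [Fintype α] [Fintype β] (A : Matrix α β ℂ) :
    ((∑ x, Complex.normSq (vecOfMat A x) : ℝ) : ℂ) = (A * Aᴴ).trace := by
  simp only [Fintype.sum_prod_type, vecOfMat, Matrix.trace, Matrix.diag_apply, Matrix.mul_apply,
    Matrix.conjTranspose_apply, Complex.star_def, Complex.mul_conj, Complex.ofReal_sum]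

theorem outer_vecOfMat_half_add_half_sub {α β : Type*} (A B : Matrix α β ℂ) :
    outer (vecOfMat ((2⁻¹ : ℝ) • (A + B))) + outer (vecOfMat ((2⁻¹ : ℝ) • (A - B))) =
      (2⁻¹ : ℝ) • (outer (vecOfMat A) + outer (vecOfMat B)) := by
  ext x y
  simp only [outer, vecOfMat, Matrix.add_apply, Matrix.sub_apply, Matrix.smul_apply,
    Matrix.of_apply, Complex.real_smul, star_mul', star_add, star_sub, Complex.star_def,
    Complex.conj_ofReal]
  push_cast
  ring

/-- The operator `ω_A = |A⟩⟩⟨⟨A| / n` on `ℂⁿ ⊗ ℂⁿ`, where `|A⟩⟩` is the vector with matrix `A`. For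
unitary `A` it is the maximally entangled pure state `(A ⊗ 1) |Ψ⁺⟩⟨Ψ⁺| (A ⊗ 1)†`. -/
noncomputable def operatorState {n : Type*} [Fintype n] (A : Matrix n n ℂ) :
    Matrix (n × n) (n × n) ℂ :=
  (Fintype.card n : ℝ)⁻¹ • outer (vecOfMat A)

theorem outer_psiPlus (N : ℕ) :
    outer (psiPlus N) = operatorState (1 : Matrix (Fin N) (Fin N) ℂ) := by
  have hsqrt : (√N : ℂ)⁻¹ * (√N : ℂ)⁻¹ = (N : ℂ)⁻¹ := by
    rw [← mul_inv, ← Complex.ofReal_mul, Real.mul_self_sqrt N.cast_nonneg, Complex.ofReal_natCast]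
  ext x y
  simp only [operatorState, outer, psiPlus, vecOfMat, Matrix.one_apply, Matrix.of_apply,
    Matrix.smul_apply, Complex.real_smul, Fintype.card_fin, Complex.ofReal_inv,
    Complex.ofReal_natCast, ← hsqrt]
  split_ifs <;> simp

theorem reorderedKron_operatorState {m n : Type*} [Fintype m] [Fintype n]
    (A : Matrix m m ℂ) (B : Matrix n n ℂ) :
    reorderedKron (operatorState A) (operatorState B) = operatorState (A ⊗ₖ B) := by
  ext x y
  simp only [reorderedKron, operatorState, outer, vecOfMat, Matrix.smul_apply, Matrix.of_apply,
    Matrix.kroneckerMap_apply, Complex.real_smul, Fintype.card_prod, Nat.cast_mul,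
    _root_.mul_inv_rev, Complex.ofReal_mul, star_mul']
  ring

theorem reorderedKron_sum_smul {α β ι κ : Type*} [Fintype ι] [Fintype κ] (p : ι → ℝ) (q : κ → ℝ)
    (ρ : ι → Matrix (α × α) (α × α) ℂ) (σ : κ → Matrix (β × β) (β × β) ℂ) :
    reorderedKron (∑ i, p i • ρ i) (∑ j, q j • σ j) =
      ∑ x : ι × κ, (p x.1 * q x.2) • reorderedKron (ρ x.1) (σ x.2) := by
  ext x y
  simp only [reorderedKron, Matrix.of_apply, Matrix.sum_apply, Matrix.smul_apply,
    Finset.sum_mul_sum, Fintype.sum_prod_type, smul_mul_smul_comm]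

section Involution

variable {n : Type*} [Fintype n] {k : ℕ}

theorem inSchmidtClass_of_isStarProjection {P : Matrix n n ℂ} (hP : IsStarProjection P)
    (hk : 0 < k) (htr : P.trace = k) : InSchmidtClass k ((k : ℝ)⁻¹ • outer (vecOfMat P)) := by
  have hrank : P.rank = k := by
    exact_mod_cast (rank_eq_trace_of_isIdempotentElem hP.isIdempotentElem).trans htr
  have hnorm : ((∑ x, Complex.normSq (vecOfMat P x) : ℝ) : ℂ) = k := by
    rw [ofReal_sum_normSq_vecOfMat, ← Matrix.star_eq_conjTranspose, hP.isSelfAdjoint.star_eq,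
      hP.isIdempotentElem.eq, htr]
  exact inSchmidtClass_inv_smul_outer (Nat.cast_pos.2 hk) (by exact_mod_cast hnorm) hrank.le

variable [DecidableEq n]

theorem isStarProjection_half_one_add {S : Matrix n n ℂ} (hS : S.IsHermitian) (hinv : S * S = 1) :
    IsStarProjection ((2⁻¹ : ℝ) • (1 + S)) where
  isIdempotentElem := by
    have hsq : (1 + S) * (1 + S) = (2 : ℝ) • (1 + S) := by
      rw [mul_add, mul_one, add_mul, one_mul, hinv]
      module
    rw [IsIdempotentElem, smul_mul_smul_comm, hsq, smul_smul]
    norm_num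
  isSelfAdjoint := (IsSelfAdjoint.all _).smul ((IsSelfAdjoint.one _).add hS.isSelfAdjoint)

theorem inSchmidtClass_midpoint_operatorState_one [Nonempty n] (hn : Fintype.card n = 2 * k)
    {S : Matrix n n ℂ} (hS : S.IsHermitian) (hinv : S * S = 1) (htr : S.trace = 0) :
    InSchmidtClass k (midpoint ℝ (operatorState 1) (operatorState S)) := by
  have hk : 0 < k := by have := Fintype.card_pos (α := n); lia
  have hP : InSchmidtClass k ((k : ℝ)⁻¹ • outer (vecOfMat ((2⁻¹ : ℝ) • (1 + S)))) :=
    inSchmidtClass_of_isStarProjection (isStarProjection_half_one_add hS hinv) hk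
      (by simp [htr, hn])
  have hQ : InSchmidtClass k ((k : ℝ)⁻¹ • outer (vecOfMat ((2⁻¹ : ℝ) • (1 - S)))) :=
    inSchmidtClass_of_isStarProjection
      (by simpa only [sub_eq_add_neg] using
        isStarProjection_half_one_add hS.neg ((neg_mul_neg S S).trans hinv)) hk
      (by simp [htr, hn])
  have hmid : midpoint ℝ (operatorState 1) (operatorState S) =
      midpoint ℝ ((k : ℝ)⁻¹ • outer (vecOfMat ((2⁻¹ : ℝ) • (1 + S))))
        ((k : ℝ)⁻¹ • outer (vecOfMat ((2⁻¹ : ℝ) • (1 - S)))) := by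
    rw [midpoint_eq_smul_add, midpoint_eq_smul_add, ← smul_add, outer_vecOfMat_half_add_half_sub,
      operatorState, operatorState, hn, ← smul_add, smul_smul (k : ℝ)⁻¹]
    push_cast
    rw [_root_.mul_inv_rev]
  rw [hmid]
  exact convex_setOf_inSchmidtClass.midpoint_mem hP hQ

theorem inSchmidtClass_sum_smul_operatorState [Nonempty n] (hn : Fintype.card n = 2 * k)
    {ι : Type*} [Fintype ι] {S : ι → Matrix n n ℂ} {w : ι → ℝ} {i₀ : ι} (hS₀ : S i₀ = 1)
    (hS : ∀ i, (S i).IsHermitian) (hinv : ∀ i, S i * S i = 1)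
    (htr : ∀ i, i ≠ i₀ → (S i).trace = 0) (hw : ∀ i, 0 ≤ w i) (hsum : ∑ i, w i = 1)
    (hw₀ : w i₀ = 1 / 2) : InSchmidtClass k (∑ i, w i • operatorState (S i)) := by
  refine sum_smul_mem_of_midpoint_mem convex_setOf_inSchmidtClass (fun i hi => ?_) hw hsum hw₀
  rw [hS₀]
  exact inSchmidtClass_midpoint_operatorState_one hn (hS i) (hinv i) (htr i hi)

end Involution

/-- The Pauli matrices `1, X, Y, Z`. -/
def pauli : Fin 4 → Matrix (Fin 2) (Fin 2) ℂ :=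
  ![1, !![0, 1; 1, 0], !![0, -Complex.I; Complex.I, 0], !![1, 0; 0, -1]]

theorem pauli_isHermitian (a : Fin 4) : (pauli a).IsHermitian := by
  ext i j
  fin_cases a <;> fin_cases i <;> fin_cases j <;> simp [pauli]

theorem pauli_mul_self (a : Fin 4) : pauli a * pauli a = 1 := by
  ext i j
  fin_cases a <;> fin_cases i <;> fin_cases j <;> simp [pauli]

theorem trace_pauli {a : Fin 4} (ha : a ≠ 0) : (pauli a).trace = 0 := by
  fin_cases a <;> simp [pauli, Matrix.trace_fin_two] at ha ⊢

theorem trace_pauli_kronecker_pauli {x : Fin 4 × Fin 4} (hx : x ≠ 0) :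
    (pauli x.1 ⊗ₖ pauli x.2).trace = 0 := by
  rw [Matrix.trace_kronecker, mul_eq_zero]
  by_contra! h
  exact hx (Prod.ext (not_imp_comm.1 trace_pauli h.1) (not_imp_comm.1 trace_pauli h.2))

theorem sum_operatorState_pauli : ∑ a, operatorState (pauli a) = 1 := by
  ext ⟨i, j⟩ ⟨k, l⟩
  fin_cases i <;> fin_cases j <;> fin_cases k <;> fin_cases l <;>
    simp [operatorState, outer, vecOfMat, pauli, Fin.sum_univ_four] <;> norm_num

/-- The spectrum of the two-qubit isotropic state `ρ_F`, listed along the Bell basis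
`operatorState (pauli a)`. -/
noncomputable def bellWeight (F : ℝ) (a : Fin 4) : ℝ :=
  if a = 0 then F else (1 - F) / 3

theorem bellWeight_nonneg {F : ℝ} (hF : F ∈ Set.Icc 0 1) (a : Fin 4) : 0 ≤ bellWeight F a := by
  unfold bellWeight
  split_ifs <;> linarith [hF.1, hF.2]

theorem sum_bellWeight (F : ℝ) : ∑ a, bellWeight F a = 1 := by
  simp only [bellWeight, Fin.sum_univ_four, Fin.reduceEq, if_true, if_false]
  ring

theorem rhoF_two_eq_sum (F : ℝ) :
    rhoF 2 F = ∑ a, bellWeight F a • operatorState (pauli a) := by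
  have hone : operatorState (1 : Matrix (Fin 2) (Fin 2) ℂ) = operatorState (pauli 0) := rfl
  have hdim : ((2 : ℕ) : ℝ) ^ 2 - 1 = 3 := by norm_num
  rw [rhoF, outer_psiPlus, ← sum_operatorState_pauli, hone, hdim, Complex.coe_smul,
    Complex.coe_smul]
  simp only [Fin.sum_univ_four, bellWeight, Fin.reduceEq, if_true, if_false]
  module

theorem reorderedKron_rhoF_two_eq_sum (F G : ℝ) :
    reorderedKron (rhoF 2 F) (rhoF 2 G) = ∑ x : Fin 4 × Fin 4,
      (bellWeight F x.1 * bellWeight G x.2) • operatorState (pauli x.1 ⊗ₖ pauli x.2) := by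
  simp only [rhoF_two_eq_sum, reorderedKron_sum_smul, reorderedKron_operatorState]

theorem rhoF_two_copies_in_S2_general {F G : ℝ} (hF : F ∈ Set.Icc 0 1) (hG : G ∈ Set.Icc 0 1)
    (hFG : F * G = 1 / 2) : InSchmidtClass 2 (reorderedKron (rhoF 2 F) (rhoF 2 G)) := by
  rw [reorderedKron_rhoF_two_eq_sum]
  refine inSchmidtClass_sum_smul_operatorState (i₀ := 0) (by simp) ?one ?hermitian ?involution
    (fun _ => trace_pauli_kronecker_pauli)
    (fun x => mul_nonneg (bellWeight_nonneg hF x.1) (bellWeight_nonneg hG x.2)) ?total hFG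
  case one => exact Matrix.one_kronecker_one
  case hermitian =>
    intro x
    rw [Matrix.IsHermitian, Matrix.conjTranspose_kronecker, (pauli_isHermitian x.1).eq,
      (pauli_isHermitian x.2).eq]
  case involution =>
    intro x
    rw [← Matrix.mul_kronecker_mul, pauli_mul_self, pauli_mul_self, Matrix.one_kronecker_one]
  case total =>
    rw [Fintype.sum_prod_type, ← Finset.sum_mul_sum, sum_bellWeight, sum_bellWeight, one_mul]

/-- For `N = 2` and `F = 1/√2`, the two-copy state `ρ_F ⊗ ρ_F`, regrouped
across the `(A₁A₂):(B₁B₂)` cut, belongs to `S_2`: it is a mixture of pure states of Schmidt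
rank at most 2. -/
theorem rhoF_two_copies_in_S2 :
    InSchmidtClass 2 (reorderedKron (rhoF 2 ((Real.sqrt 2))⁻¹) (rhoF 2 ((Real.sqrt 2))⁻¹)) := by
  have hF : (√2)⁻¹ ∈ Set.Icc (0 : ℝ) 1 :=
    ⟨by positivity, inv_le_one_of_one_le₀ (Real.one_le_sqrt.2 one_le_two)⟩
  refine rhoF_two_copies_in_S2_general hF hF ?_
  rw [← mul_inv, Real.mul_self_sqrt zero_le_two, one_div]
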